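/- Monodromy criterion for global solutions of the connection ∂ + a·dz/z on the punctured plane: let a ∈ ℂ. There exists a function f : ℂ → ℂ which is differentiable (holomorphic) on ℂ \ {0}, is not identically zero on ℂ \ {0}, and satisfies z * deriv f z + a * f z = 0 for all z ≠ 0, if and only if a is an integer (i.e. a lies in the image of ℤ in ℂ). -/

import Mathlib

/-!
Pull a solution `f` back along the universal covering `exp : ℂ → ℂ \ {0}`. The equation says
exactly that `w ↦ f (exp w) * exp (a * w)` has zero derivative, so this function is constant.
Comparing its values at `w` and `w + 2πi`, where `f (exp w) ≠ 0`, shows that the monodromy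
`exp (2πi a)` is `1`, which forces `a` to be an integer. Conversely, for `a = n` an integer, the
single-valued function `z ↦ z ^ (-n)` is a solution.
-/

/-- A solution on the punctured plane, pulled back by `exp`, is a constant multiple of
`exp (-a * w)`. -/
theorem pullback_mul_exp_const {a : ℂ} {f : ℂ → ℂ}
    (hf : DifferentiableOn ℂ f {z : ℂ | z ≠ 0})
    (hode : ∀ z : ℂ, z ≠ 0 → z * deriv f z + a * f z = 0) (v w : ℂ) :
    f (Complex.exp v) * Complex.exp (a * v) = f (Complex.exp w) * Complex.exp (a * w) := by
  have hderiv : ∀ u : ℂ,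
      HasDerivAt (fun u => f (Complex.exp u) * Complex.exp (a * u)) 0 u := by
    intro u
    have hu := Complex.exp_ne_zero u
    have hfu : HasDerivAt f (deriv f (Complex.exp u)) (Complex.exp u) :=
      (hf.differentiableAt (isOpen_ne.mem_nhds hu)).hasDerivAt
    have h₁ := hfu.comp u (Complex.hasDerivAt_exp u)
    have h₂ := ((hasDerivAt_id u).const_mul a).cexp
    refine (h₁.mul h₂).congr_deriv ?_
    simp only [Function.comp_apply, id]
    linear_combination Complex.exp (a * u) * hode _ hu
  exact is_const_of_deriv_eq_zero (fun u => (hderiv u).differentiableAt)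
    (fun u => (hderiv u).deriv) v w

/-- Monodromy criterion for global solutions of the connection `∂ + a·dz/z` on the punctured
plane: a global nonzero holomorphic solution of `z * f' + a * f = 0` on `ℂ \ {0}` exists
iff `a` is an integer. -/
theorem monodromy_criterion_punctured_plane (a : ℂ) :
    (∃ f : ℂ → ℂ,
        DifferentiableOn ℂ f {z : ℂ | z ≠ 0} ∧
        ¬ (∀ z : ℂ, z ≠ 0 → f z = 0) ∧
        ∀ z : ℂ, z ≠ 0 → z * deriv f z + a * f z = 0) ↔
    ∃ n : ℤ, (n : ℂ) = a := by
  constructor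
  · rintro ⟨f, hf, hne, hode⟩
    push Not at hne
    obtain ⟨z, hz, hfz⟩ := hne
    have h := pullback_mul_exp_const hf hode
      (Complex.log z + 2 * Real.pi * Complex.I) (Complex.log z)
    rw [Complex.exp_periodic, Complex.exp_log hz] at h
    obtain ⟨n, hn⟩ := Complex.exp_eq_exp_iff_exists_int.mp (mul_left_cancel₀ hfz h)
    refine ⟨n, mul_right_cancel₀ Complex.two_pi_I_ne_zero ?_⟩
    linear_combination -hn
  · rintro ⟨n, rfl⟩
    refine ⟨fun z => z ^ (-n), fun z hz => ?_, fun h => ?_, fun z hz => ?_⟩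
    · exact (hasDerivAt_zpow (-n) z (Or.inl hz)).differentiableAt.differentiableWithinAt
    · simpa using h 1 one_ne_zero
    · rw [(hasDerivAt_zpow (-n) z (Or.inl hz)).deriv, zpow_sub_one₀ hz]
      push_cast
      field_simp
      ring
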